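/- Let ν be a measure on ℝ^d with ν({0}) = 0, α ∈ ℝ, m ≥ 1 an integer, and define Φ_α(ν)(B) = ∫_0^1 ν(s^{-1}B) s^{-α-1} ds. Then the (m+1)-fold iterate satisfies Φ_α^{m+1}(ν)(B) = (1/m!) ∫_0^1 ν(s^{-1}B) s^{-α-1} (log s^{-1})^m ds for all Borel sets B. -/

import Mathlib

open MeasureTheory
open scoped ENNReal Pointwise

/-! In the coordinate `s = exp (-t)` the operator `Φ_α` averages `t ↦ ν (exp t • B)` against
`exp (α t) dt` on `(0, ∞)`. Since `t ↦ exp t • B` is a flow, iterating `Φ_α` convolves the averaging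
measures, and repeated integration of `1` turns `exp (α t)` into `exp (α t) tⁿ / n!`, where
`t = log s⁻¹`.

The function `t ↦ ν (exp t • B)` need not be measurable, so Tonelli's theorem is not directly
available. It has, however, a measurable minorant with the same integral against every measure
absolutely continuous with respect to Lebesgue measure, and these are the only measures that
occur. -/

theorem exists_measurable_le_forall_lintegral_eq_of_absolutelyContinuous {Ω : Type*}
    [MeasurableSpace Ω] (ρ : Measure Ω) [SFinite ρ] (f : Ω → ℝ≥0∞) :
    ∃ g : Ω → ℝ≥0∞, Measurable g ∧ g ≤ f ∧
      ∀ μ : Measure Ω, μ ≪ ρ → ∫⁻ x, f x ∂μ = ∫⁻ x, g x ∂μ := by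
  obtain ⟨τ, _, hρτ, -⟩ := exists_isFiniteMeasure_absolutelyContinuous ρ
  obtain ⟨g, hg, hgf, hfg⟩ := exists_measurable_le_forall_setLIntegral_eq τ f
  refine ⟨g, hg, hgf, fun μ hμ ↦ le_antisymm ?_ (lintegral_mono hgf)⟩
  obtain ⟨φ, hφ, hφf, hfφ⟩ := exists_measurable_le_lintegral_eq μ f
  have hφg : φ ≤ᵐ[τ] g := ae_le_of_forall_setLIntegral_le_of_sigmaFinite hφ fun s _ _ ↦
    (lintegral_mono hφf).trans (hfg s).le
  exact hfφ.trans_le (lintegral_mono_ae ((hμ.trans hρτ).ae_le hφg))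

theorem lintegral_conv_of_absolutelyContinuous {G : Type*} [AddGroup G] [MeasurableSpace G]
    [MeasurableAdd₂ G] {μ ν ρ : Measure G} [SFinite ν] [SFinite ρ] [ρ.IsAddLeftInvariant]
    (hν : ν ≪ ρ) (f : G → ℝ≥0∞) :
    ∫⁻ z, f z ∂(μ ∗ ν) = ∫⁻ x, ∫⁻ y, f (x + y) ∂ν ∂μ := by
  obtain ⟨g, hg, -, hfg⟩ := exists_measurable_le_forall_lintegral_eq_of_absolutelyContinuous ρ f
  have map_add_left (x : G) : ν.map (x + ·) ≪ ρ := by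
    simpa only [map_add_left_eq_self] using hν.map (measurable_const_add x)
  have inner (x : G) : ∫⁻ y, f (x + y) ∂ν = ∫⁻ y, g (x + y) ∂ν := by
    rw [← (measurableEmbedding_addLeft x).lintegral_map, hfg _ (map_add_left x),
      (measurableEmbedding_addLeft x).lintegral_map]
  rw [hfg _ (Measure.conv_absolutelyContinuous hν), Measure.lintegral_conv hg]
  simp only [inner]

/-- The density `t ↦ exp (c t) tⁿ / n!` on `(0, ∞)`. For `c < 0` it is, up to a constant factor, the
density of the Erlang distribution with shape `n + 1` and rate `-c`. -/
noncomputable def erlangKernel (c : ℝ) (n : ℕ) : ℝ → ℝ≥0∞ :=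
  (Set.Ioi 0).indicator fun t ↦ ENNReal.ofReal (Real.exp (c * t) * (t ^ n / n.factorial))

@[fun_prop]
theorem measurable_erlangKernel (c : ℝ) (n : ℕ) : Measurable (erlangKernel c n) :=
  Measurable.indicator (by fun_prop) measurableSet_Ioi

theorem setLIntegral_Ioo_pow_div_factorial (n : ℕ) {t : ℝ} (ht : 0 ≤ t) :
    ∫⁻ s in Set.Ioo 0 t, ENNReal.ofReal (s ^ n / n.factorial) =
      ENNReal.ofReal (t ^ (n + 1) / (n + 1).factorial) := by
  have h_int : IntegrableOn (fun s : ℝ ↦ s ^ n / n.factorial) (Set.Ioo 0 t) :=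
    (Continuous.integrableOn_Icc (by fun_prop)).mono_set Set.Ioo_subset_Icc_self
  have hpos : ∀ᵐ s : ℝ ∂volume.restrict (Set.Ioo 0 t), 0 ≤ s ^ n / n.factorial :=
    ae_restrict_of_forall_mem measurableSet_Ioo fun s hs ↦
      div_nonneg (pow_nonneg hs.1.le n) n.factorial.cast_nonneg
  rw [← ofReal_integral_eq_lintegral_ofReal h_int hpos, ← integral_Ioc_eq_integral_Ioo,
    ← intervalIntegral.integral_of_le ht, intervalIntegral.integral_div, integral_pow,
    Nat.factorial_succ]
  congr 1
  rw [zero_pow n.succ_ne_zero, sub_zero, div_div]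
  push_cast
  rfl

theorem erlangKernel_mul_erlangKernel_zero (c : ℝ) (n : ℕ) (s t : ℝ) :
    erlangKernel c n s * erlangKernel c 0 (-s + t) =
      (Set.Ioo 0 t).indicator
        (fun s ↦ ENNReal.ofReal (Real.exp (c * t)) * ENNReal.ofReal (s ^ n / n.factorial)) s := by
  by_cases hs : s ∈ Set.Ioo 0 t
  · have hexp : Real.exp (c * t) = Real.exp (c * s) * Real.exp (c * (-s + t)) := by
      rw [← Real.exp_add]; ring_nf
    rw [erlangKernel, erlangKernel, Set.indicator_of_mem hs,
      Set.indicator_of_mem (Set.mem_Ioi.mpr hs.1), Set.indicator_of_mem (by simpa using hs.2),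
      ← ENNReal.ofReal_mul' (by positivity), ← ENNReal.ofReal_mul (by positivity), hexp]
    congr 1
    simp only [pow_zero, Nat.factorial_zero, Nat.cast_one, div_one, mul_one]
    ring
  · rw [Set.indicator_of_notMem hs, mul_eq_zero]
    by_contra! h
    exact hs ⟨Set.mem_of_indicator_ne_zero h.1,
      by simpa using Set.mem_of_indicator_ne_zero h.2⟩

theorem erlangKernel_lconvolution_erlangKernel_zero (c : ℝ) (n : ℕ) :
    erlangKernel c n ⋆ₗ erlangKernel c 0 = erlangKernel c (n + 1) := by
  ext t
  simp only [lconvolution_def, erlangKernel_mul_erlangKernel_zero]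
  rw [lintegral_indicator measurableSet_Ioo, lintegral_const_mul _ (by fun_prop)]
  by_cases ht : 0 < t
  · rw [setLIntegral_Ioo_pow_div_factorial n ht.le, ← ENNReal.ofReal_mul (by positivity),
      erlangKernel, Set.indicator_of_mem (Set.mem_Ioi.mpr ht)]
  · rw [Set.Ioo_eq_empty ht, erlangKernel, Set.indicator_of_notMem (by simpa using ht)]
    simp

theorem lintegral_withDensity_erlangKernel_comp_exp_neg (α : ℝ) (n : ℕ) (f : ℝ → ℝ≥0∞) :
    ∫⁻ t, f (Real.exp (-t)) ∂volume.withDensity (erlangKernel α n) =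
      ∫⁻ s in Set.Ioo (0 : ℝ) 1, f s * ENNReal.ofReal
        ((1 / (n.factorial : ℝ)) * s ^ (-α - 1 : ℝ) * Real.log s⁻¹ ^ n) := by
  have image_eq : (fun t ↦ Real.exp (-t)) '' Set.Ioi 0 = Set.Ioo 0 1 := by
    rw [← Set.image_image Real.exp, Set.image_neg_Ioi, neg_zero, Real.image_exp_Iio, Real.exp_zero]
  have hderiv (t : ℝ) : HasDerivAt (fun t ↦ Real.exp (-t)) (-Real.exp (-t)) t := by
    simpa using (hasDerivAt_neg t).exp
  rw [← image_eq, lintegral_image_eq_lintegral_deriv_mul_of_antitoneOn measurableSet_Ioi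
      (fun t _ ↦ (hderiv t).hasDerivWithinAt)
      (fun _ _ _ _ h ↦ Real.exp_le_exp.mpr (neg_le_neg h)),
    erlangKernel, withDensity_indicator measurableSet_Ioi,
    lintegral_withDensity_eq_lintegral_mul_non_measurable _ (by fun_prop)
      (.of_forall fun _ ↦ ENNReal.ofReal_lt_top)]
  refine lintegral_congr fun t ↦ ?_
  have hexp : Real.exp (α * t) = Real.exp (-t) * Real.exp (-t) ^ (-α - 1) := by
    rw [← Real.exp_mul, ← Real.exp_add]; ring_nf
  rw [Pi.mul_apply, neg_neg, ← Real.exp_neg, neg_neg, Real.log_exp, mul_left_comm,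
    ← ENNReal.ofReal_mul (by positivity), mul_comm, hexp]
  congr 2
  ring

theorem stmt_6_general {X : Type*} [SemigroupAction ℝ X] (α : ℝ)
    (Φ : (X → ℝ≥0∞) → (X → ℝ≥0∞))
    (hΦ : ∀ f x, Φ f x =
      ∫⁻ s in Set.Ioo (0 : ℝ) 1, f (s⁻¹ • x) * ENNReal.ofReal (s ^ (-α - 1 : ℝ)))
    (n : ℕ) (f : X → ℝ≥0∞) (x : X) :
    Φ^[n + 1] f x = ∫⁻ s in Set.Ioo (0 : ℝ) 1, f (s⁻¹ • x) * ENNReal.ofReal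
      ((1 / (n.factorial : ℝ)) * s ^ (-α - 1 : ℝ) * Real.log s⁻¹ ^ n) := by
  have flow_average (n : ℕ) (f : X → ℝ≥0∞) (x : X) :
      ∫⁻ s in Set.Ioo (0 : ℝ) 1, f (s⁻¹ • x) * ENNReal.ofReal
        ((1 / (n.factorial : ℝ)) * s ^ (-α - 1 : ℝ) * Real.log s⁻¹ ^ n) =
      ∫⁻ t, f (Real.exp t • x) ∂volume.withDensity (erlangKernel α n) := by
    rw [← lintegral_withDensity_erlangKernel_comp_exp_neg α n fun s ↦ f (s⁻¹ • x)]
    simp only [← Real.exp_neg, neg_neg]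
  have Φ_eq (f : X → ℝ≥0∞) (x : X) :
      Φ f x = ∫⁻ t, f (Real.exp t • x) ∂volume.withDensity (erlangKernel α 0) := by
    simpa [hΦ] using flow_average 0 f x
  rw [flow_average]
  induction n generalizing f with
  | zero => exact Φ_eq f x
  | succ n ih =>
    rw [Function.iterate_succ_apply, ih, ← erlangKernel_lconvolution_erlangKernel_zero,
      ← conv_withDensity_eq_lconvolution (by fun_prop) (by fun_prop),
      lintegral_conv_of_absolutelyContinuous (withDensity_absolutelyContinuous volume _)]
    simp only [Φ_eq, ← mul_smul, ← Real.exp_add, add_comm]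

/-- The (m+1)-fold iterate of Φ_α(ν)(B) = ∫_0^1 ν(s⁻¹B)s^{-α-1}ds satisfies
Φ_α^{m+1}(ν)(B) = (1/m!) ∫_0^1 ν(s⁻¹B) s^{-α-1} (log s⁻¹)^m ds. -/
theorem stmt_6 {d : ℕ} (α : ℝ) (m : ℕ) (hm : 1 ≤ m)
    (ν : Measure (Fin d → ℝ)) (hν0 : ν {0} = 0)
    (Φ : (Set (Fin d → ℝ) → ℝ≥0∞) → (Set (Fin d → ℝ) → ℝ≥0∞))
    (hΦ : ∀ f : Set (Fin d → ℝ) → ℝ≥0∞, ∀ B : Set (Fin d → ℝ),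
      Φ f B = ∫⁻ s in Set.Ioo (0:ℝ) 1, f (s⁻¹ • B) * ENNReal.ofReal (s ^ (-α - 1 : ℝ)))
    (B : Set (Fin d → ℝ)) (hB : MeasurableSet B) :
    Φ^[m + 1] (fun A => ν A) B
      = ∫⁻ s in Set.Ioo (0:ℝ) 1,
          ν (s⁻¹ • B) * ENNReal.ofReal
            ((1 / (Nat.factorial m : ℝ)) * s ^ (-α - 1 : ℝ) * (Real.log s⁻¹) ^ m) :=
  stmt_6_general α Φ hΦ m (fun A => ν A) B
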